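/- For every prime ideal P of David's domain J with X ∈ P and height(P) = 2, the localization J_P is a Noetherian local ring; moreover its maximal ideal PJ_P is generated by two elements. -/

import Mathlib

/-!
Write `x` for `X` and `zₙ` for `ζₙ`. Each `Jₙ = k[x, zₙ, zₙ₊₁]` (indexed from `0`) is a polynomial
ring in three variables, and all of them become equal after inverting `x`. Hence `x` is prime in
`J`. Modulo `x` the recursion reads `zₙ ≡ -zₙ₊₁ ^ s(n+2)`, so `J / xJ` is the increasing union of
the polynomial rings `k[zₙ]`, with `z₀` equal, up to sign, to a power of `zₙ` whose exponent is
at least `2 ^ n`.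

Let `P` be a prime of height two containing `x`.

* `z₀ ∉ P`. Otherwise `P` contains every `zₙ`, hence the traces on `J` of the primes `(z₀)` and
  `(z₀, z₁)` of `k[x, x⁻¹, z₀, z₁]`, and these give a chain of length three below `P`
  (`System.three_le_height_of_mem`).
* `P J_P` is generated by `x` and `b = f(z₀)`, where `f` is the minimal polynomial over `k` of the
  class of `z₀` in `J / P` (and `f = 0` if that class is transcendental). Modulo `x` an element of
  `P` is a polynomial in some `zₙ`, a multiple of the minimal polynomial `w` of the class of `zₙ`,
  and `f(± T ^ N) = w v` with `v(zₙ) ∉ P` in the algebraic case: in characteristic zero and away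
  from `z₀ = 0`, the polynomial `f(± T ^ N)` has no multiple roots (`System.exists_generator`).
* `J_P` is Noetherian by Cohen's theorem, once its primes are finitely generated. A nonzero prime
  strictly below `P` is principal, because `P` has height two and every nonzero prime of `J`
  contains a prime element (`System.exists_prime_mem`).

The last fact is Nagata's argument: a prime element `g` of `k[x, z₀, z₁]` other than `x`, divided
by the largest power of `x` dividing it in `J`, is prime in `J`. Such a largest power
exists since `⋂ xᵐ J = 0` (`System.finiteMultiplicity`). Indeed this intersection is a prime `Q`
contained in `(x)` and not containing `x`; if it were nonzero, then in the fraction field of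
`J / Q` all the `zₙ` would lie in a finite extension of `k(x, z₀)`, of degree `d` say, whereas
the powers `zₙ ^ i` with `i` less than the exponent above are linearly independent over `k(x, z₀)`,
since they are so over `k(z₀)` after reduction modulo `x`; for large `n` there are more than `d` of
them (`System.injective_of_ker`).
-/

noncomputable section

/-- `F = k(X, ζ₀, ζ₁)`, the fraction field of a polynomial ring in three
indeterminates over `k`. -/
abbrev DavidField (k : Type) [Field k] : Type := FractionRing (MvPolynomial (Fin 3) k)

variable (k : Type) [Field k]

/-- The indeterminate `X`, viewed inside `F`. -/
def davidX : DavidField k :=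
  algebraMap (MvPolynomial (Fin 3) k) (DavidField k) (MvPolynomial.X 0)

variable (s : ℕ → ℕ)

/-- The elements `ζₙ ∈ F`: `ζ₀, ζ₁` are the other two indeterminates and
`ζₙ = (ζₙ₋₁^{s(n)} + ζₙ₋₂)/X` for `n ≥ 2`. -/
def davidZeta : ℕ → DavidField k
  | 0 => algebraMap (MvPolynomial (Fin 3) k) (DavidField k) (MvPolynomial.X 1)
  | 1 => algebraMap (MvPolynomial (Fin 3) k) (DavidField k) (MvPolynomial.X 2)
  | n + 2 => (davidZeta (n + 1) ^ s (n + 2) + davidZeta n) / davidX k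

/-- The subring `Jₙ₊₁ = k[X, ζₙ, ζₙ₊₁]` of `F` (for `n ≥ 0`, i.e. this is
`J_m = k[X, ζ_{m-1}, ζ_m]` for `m = n+1 ≥ 1`). -/
def davidJn (n : ℕ) : Subalgebra k (DavidField k) :=
  Algebra.adjoin k {davidX k, davidZeta k s n, davidZeta k s (n + 1)}

/-- David's 3-dimensional non-Noetherian factorial domain
`J = ⋃_{m ≥ 1} J_m`, the union of the ascending chain `J₁ ⊆ J₂ ⊆ ⋯`. -/
def davidJ : Subalgebra k (DavidField k) := ⨆ n : ℕ, davidJn k s n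

/-- The element `X` belongs to `J`. -/
theorem davidX_mem : davidX k ∈ davidJ k s :=
  le_iSup (davidJn k s) 0 (Algebra.subset_adjoin (Set.mem_insert _ _))

namespace DavidDomain

/-! ### The polynomial rings `Jₙ` in coordinates -/

open MvPolynomial (X C aeval)

variable {k J : Type} [Field k] [CommRing J] [Algebra k J]

/-- The evaluation `k[T₀, T₁, T₂] → J` at `(x, zₙ, zₙ₊₁)`. -/
def theta (k : Type) {J : Type} [Field k] [CommRing J] [Algebra k J] (x : J) (z : ℕ → J) (n : ℕ) :
    MvPolynomial (Fin 3) k →ₐ[k] J :=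
  aeval ![x, z n, z (n + 1)]

@[simp] lemma theta_X0 (x : J) (z : ℕ → J) (n : ℕ) : theta k x z n (X 0) = x := by
  simp [theta]

@[simp] lemma theta_X1 (x : J) (z : ℕ → J) (n : ℕ) : theta k x z n (X 1) = z n := by
  simp [theta]

@[simp] lemma theta_X2 (x : J) (z : ℕ → J) (n : ℕ) : theta k x z n (X 2) = z (n + 1) := by
  simp [theta]

/-- The intrinsic description of David's domain, free of the ambient field `F`: elements `x`, `zₙ`
of a `k`-algebra `J` satisfying the recursion, such that `J` is the union of the subalgebras
`k[x, zₙ, zₙ₊₁]` and `x, z₀, z₁` are algebraically independent. -/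
structure System (k : Type) {J : Type} [Field k] [CommRing J] [Algebra k J]
    (s : ℕ → ℕ) (x : J) (z : ℕ → J) : Prop where
  two_le : ∀ n, 2 ≤ s (n + 2)
  rel : ∀ n, x * z (n + 2) = z (n + 1) ^ s (n + 2) + z n
  exhaust : ∀ a : J, ∃ n p, theta k x z n p = a
  inj_zero : Function.Injective (theta k x z 0)

/-- The inclusion `Jₙ ⊆ Jₙ₊₁` in coordinates, coming from
`zₙ = x zₙ₊₂ - zₙ₊₁ ^ s(n+2)`. -/
def trans (k : Type) [Field k] (s : ℕ → ℕ) (n : ℕ) :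
    MvPolynomial (Fin 3) k →ₐ[k] MvPolynomial (Fin 3) k :=
  aeval ![X 0, X 0 * X 2 - X 1 ^ s (n + 2), X 1]

/-- In coordinates, reduction of `Jₙ` modulo `x`, with values in `k[zₙ₊₁]`: `x ↦ 0`,
`zₙ ↦ -zₙ₊₁ ^ s(n+2)`. -/
def red (k : Type) [Field k] (s : ℕ → ℕ) (n : ℕ) :
    MvPolynomial (Fin 3) k →ₐ[k] Polynomial k :=
  aeval ![0, - Polynomial.X ^ s (n + 2), Polynomial.X]

namespace System

variable {s : ℕ → ℕ} {x : J} {z : ℕ → J}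

lemma theta_trans (h : System k s x z) (n : ℕ) (p : MvPolynomial (Fin 3) k) :
    theta k x z (n + 1) (trans k s n p) = theta k x z n p := by
  suffices H : (theta k x z (n + 1)).comp (trans k s n) = theta k x z n from
    DFunLike.congr_fun H p
  apply MvPolynomial.algHom_ext
  intro i
  fin_cases i
  · simp [trans]
  · have := h.rel n
    simp only [AlgHom.comp_apply, trans]
    simp
    rw [this]; ring
  · simp [trans]

lemma theta_mono (h : System k s x z) (n d : ℕ) (p : MvPolynomial (Fin 3) k) :
    ∃ q, theta k x z (n + d) q = theta k x z n p := by
  induction d with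
  | zero => exact ⟨p, rfl⟩
  | succ d ih =>
    obtain ⟨q, hq⟩ := ih
    exact ⟨trans k s (n + d) q, by rw [← add_assoc, h.theta_trans, hq]⟩

/-- `Jₙ` and `Jₙ₊₁` agree after inverting `x`. -/
lemma exists_pow_mul_eq_trans (s : ℕ → ℕ) (n : ℕ) (p : MvPolynomial (Fin 3) k) :
    ∃ N q, X 0 ^ N * p = trans k s n q := by
  induction p using MvPolynomial.induction_on with
  | C a => exact ⟨0, C a, by simp [trans]⟩
  | add p q hp hq =>
    obtain ⟨N, p', hp⟩ := hp
    obtain ⟨M, q', hq⟩ := hq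
    refine ⟨N + M, X 0 ^ M * p' + X 0 ^ N * q', ?_⟩
    rw [map_add, map_mul, map_mul, ← hp, ← hq]
    simp [trans]; ring
  | mul_X p i hp =>
    obtain ⟨N, p', hp⟩ := hp
    obtain ⟨M, r, hr⟩ : ∃ M r, X 0 ^ M * X i = trans k s n r := by
      fin_cases i
      · exact ⟨0, X 0, by simp [trans]⟩
      · exact ⟨0, X 2, by simp [trans]⟩
      · exact ⟨1, X 1 + X 2 ^ s (n + 2), by simp [trans]⟩
    refine ⟨N + M, p' * r, ?_⟩
    rw [map_mul, ← hp, ← hr]; ring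

lemma x_ne_zero (h : System k s x z) : x ≠ 0 := by
  intro hx
  have : theta k x z 0 (X 0) = theta k x z 0 0 := by simp [hx]
  exact MvPolynomial.X_ne_zero _ (h.inj_zero this)

lemma inj (h : System k s x z) (n : ℕ) : Function.Injective (theta k x z n) := by
  induction n with
  | zero => exact h.inj_zero
  | succ n ih =>
    rw [injective_iff_map_eq_zero] at ih ⊢
    intro p hp
    obtain ⟨N, q, hq⟩ := exists_pow_mul_eq_trans s n p
    have h1 : theta k x z n q = 0 := by rw [← h.theta_trans, ← hq, map_mul, hp, mul_zero]
    rw [ih q h1, map_zero] at hq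
    exact (mul_eq_zero.1 hq).resolve_left (pow_ne_zero _ (MvPolynomial.X_ne_zero _))

/-- `J` is contained in `k[x, x⁻¹, z₀, z₁]`. -/
lemma exists_pow_mul_eq_theta (h : System k s x z) (a : J) :
    ∃ N p, x ^ N * a = theta k x z 0 p := by
  obtain ⟨n, p, rfl⟩ := h.exhaust a
  induction n generalizing p with
  | zero => exact ⟨0, p, by simp⟩
  | succ n ih =>
    obtain ⟨N, q, hq⟩ := exists_pow_mul_eq_trans s n p
    obtain ⟨M, r, hr⟩ := ih q
    refine ⟨M + N, r, ?_⟩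
    rw [← hr, ← h.theta_trans n q, ← hq]
    simp; ring

/-- `x` is prime in `J` because it is a variable of each polynomial ring `Jₙ`. -/
lemma prime_x (h : System k s x z) (hx : ¬ IsUnit x) : Prime x := by
  refine ⟨h.x_ne_zero, hx, ?_⟩
  rintro a b ⟨c, hc⟩
  obtain ⟨n₁, p, rfl⟩ := h.exhaust a
  obtain ⟨n₂, q, rfl⟩ := h.exhaust b
  obtain ⟨n₃, r, rfl⟩ := h.exhaust c
  obtain ⟨p', hp⟩ := h.theta_mono n₁ (n₂ + n₃) p
  obtain ⟨q', hq⟩ := h.theta_mono n₂ (n₁ + n₃) q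
  obtain ⟨r', hr⟩ := h.theta_mono n₃ (n₁ + n₂) r
  rw [show n₂ + (n₁ + n₃) = n₁ + (n₂ + n₃) by ring] at hq
  rw [show n₃ + (n₁ + n₂) = n₁ + (n₂ + n₃) by ring] at hr
  rw [← hp, ← hq, ← hr] at hc
  rw [← hp, ← hq]
  have e : p' * q' = X 0 * r' := h.inj _ (by simpa using hc)
  rcases (MvPolynomial.X_prime (i := (0 : Fin 3)) (R := k)).2.2 p' q' ⟨r', e⟩ with H | H
  · left; simpa using map_dvd (theta k x z (n₁ + (n₂ + n₃))) H
  · right; simpa using map_dvd (theta k x z (n₁ + (n₂ + n₃))) H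

/-! ### Reduction modulo `x` -/

lemma red_trans (s : ℕ → ℕ) (n : ℕ) (p : MvPolynomial (Fin 3) k) :
    red k s (n + 1) (trans k s n p) = (red k s n p).comp (-Polynomial.X ^ s (n + 3)) := by
  suffices H : (red k s (n + 1)).comp (trans k s n) =
      (Polynomial.aeval (-Polynomial.X ^ s (n + 3))).comp (red k s n) from by
    have := DFunLike.congr_fun H p
    simpa [Polynomial.comp_eq_aeval] using this
  apply MvPolynomial.algHom_ext
  intro i
  fin_cases i
  · simp [red, trans]
  · simp [red, trans]
  · simp [red, trans]

/-- An element of `Jₙ` divisible by `x` in `J` dies under the reduction `Jₙ → k[zₙ₊₁]`;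
in other words, `J / xJ` is the union of the polynomial rings `k[zₙ]`. -/
lemma red_eq_zero_of_dvd (h : System k s x z) {n : ℕ} {p : MvPolynomial (Fin 3) k}
    (hp : x ∣ theta k x z n p) : red k s n p = 0 := by
  obtain ⟨c, hc⟩ := hp
  obtain ⟨m, q, rfl⟩ := h.exhaust c
  obtain ⟨q, hq⟩ := h.theta_mono m n q
  rw [← hq, add_comm] at hc
  clear hq
  generalize m = d at hc
  induction d generalizing n p with
  | zero =>
    have e : p = X 0 * q := h.inj _ (by simpa using hc)
    simp [e, red]
  | succ d ih =>
    have := @ih (n + 1) (trans k s n p) (by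
      rw [h.theta_trans, hc]; congr 2; congr 1; ring)
    rw [red_trans, Polynomial.comp_eq_zero_iff] at this
    refine this.resolve_right fun H => ?_
    have h2 := congrArg Polynomial.natDegree H.2
    rw [Polynomial.natDegree_neg, Polynomial.natDegree_X_pow, Polynomial.natDegree_C] at h2
    have := h.two_le (n + 1)
    rw [show n + 1 + 2 = n + 3 by ring] at this
    omega

lemma eq_zero_of_dvd_aeval (h : System k s x z) {n : ℕ} {g : Polynomial k}
    (hg : x ∣ Polynomial.aeval (z n) g) : g = 0 := by
  have e : theta k x z n (Polynomial.aeval (X 1) g) = Polynomial.aeval (z n) g := by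
    rw [← Polynomial.aeval_algHom_apply, theta_X1]
  rw [← e] at hg
  have := h.red_eq_zero_of_dvd hg
  rw [← Polynomial.aeval_algHom_apply] at this
  have h1 : red k s n (X 1) = - Polynomial.X ^ s (n + 2) := by simp [red]
  rw [h1, ← Polynomial.comp_eq_aeval, Polynomial.comp_eq_zero_iff] at this
  refine this.resolve_right fun H => ?_
  have h2 := congrArg Polynomial.natDegree H.2
  rw [Polynomial.natDegree_neg, Polynomial.natDegree_X_pow, Polynomial.natDegree_C] at h2
  have := h.two_le n
  omega

lemma dvd_add_pow (h : System k s x z) (n : ℕ) : x ∣ z n + z (n + 1) ^ s (n + 2) :=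
  ⟨z (n + 2), by rw [h.rel]; ring⟩

/-- Modulo `x`, every element of `J` is a polynomial in a single `zₙ`. -/
lemma exists_dvd_sub_aeval (h : System k s x z) (a : J) :
    ∃ (n : ℕ) (g : Polynomial k), x ∣ a - Polynomial.aeval (z n) g := by
  obtain ⟨n, p, rfl⟩ := h.exhaust a
  refine ⟨n + 1, red k s n p, ?_⟩
  rw [← Ideal.mem_span_singleton, ← Ideal.Quotient.eq]
  suffices H : (Ideal.Quotient.mkₐ k (Ideal.span {x})).comp (theta k x z n) =
      ((Ideal.Quotient.mkₐ k (Ideal.span {x})).comp (Polynomial.aeval (z (n + 1)))).comp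
        (red k s n) from DFunLike.congr_fun H p
  apply MvPolynomial.algHom_ext
  intro i
  fin_cases i
  · simp [red]
  · simp only [AlgHom.comp_apply, Ideal.Quotient.mkₐ_eq_mk]
    rw [Ideal.Quotient.eq, Ideal.mem_span_singleton]
    simpa [red] using h.dvd_add_pow n
  · simp [red]

/-- `∏_{i < n} s(i+2)`, the exponent with `z₀ ≡ ± zₙ ^ expo n` modulo `x`. -/
def expo (s : ℕ → ℕ) (n : ℕ) : ℕ := ∏ i ∈ Finset.range n, s (i + 2)

lemma exists_sign (h : System k s x z) (n : ℕ) :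
    ∃ e : k, e ≠ 0 ∧ x ∣ z 0 - algebraMap k J e * z n ^ expo s n := by
  induction n with
  | zero => exact ⟨1, one_ne_zero, by simp [expo]⟩
  | succ n ih =>
    obtain ⟨e, he, H⟩ := ih
    refine ⟨e * (-1) ^ expo s n, mul_ne_zero he (pow_ne_zero _ (by simp)), ?_⟩
    have h1 : x ∣ z n ^ expo s n - (-z (n + 1) ^ s (n + 2)) ^ expo s n :=
      dvd_trans (by simpa using h.dvd_add_pow n) (sub_dvd_pow_sub_pow _ _ _)
    have h2 := dvd_add H (h1.mul_left (algebraMap k J e))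
    convert h2 using 1
    rw [neg_pow (z (n + 1) ^ _), ← pow_mul, show expo s (n + 1) = s (n + 2) * expo s n by
      rw [expo, Finset.prod_range_succ, mul_comm, expo]]
    simp only [map_mul, map_pow, map_neg, map_one]
    ring

lemma lt_expo (h : System k s x z) (n : ℕ) : n < expo s n := by
  induction n with
  | zero => simp [expo]
  | succ n ih =>
    rw [expo, Finset.prod_range_succ, ← expo]
    have := h.two_le n
    nlinarith

/-! ### Separatedness of the `x`-adic filtration -/

/-- The substitution `k[T₀][T₁] → J`, `T₀ ↦ y`, `T₁ ↦ x`. -/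
def ev (x y : J) : Polynomial (Polynomial k) →+* J :=
  Polynomial.eval₂RingHom (Polynomial.aeval (R := k) y).toRingHom x

/-- `1, T, …, T ^ (N-1)` are linearly independent over `k[e T ^ N]`. -/
lemma eq_zero_of_sum_comp {N : ℕ} {e : k} (he : e ≠ 0) (b : Fin N → Polynomial k)
    (hb : ∑ i, (b i).comp (Polynomial.C e * Polynomial.X ^ N) * Polynomial.X ^ (i : ℕ) = 0)
    (i : Fin N) : b i = 0 := by
  have hN : 0 < N := i.pos
  have hcomp : ∀ i, (b i).comp (Polynomial.C e * Polynomial.X ^ N) =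
      Polynomial.expand k N ((b i).comp (Polynomial.C e * Polynomial.X)) := by
    intro i
    rw [Polynomial.expand_eq_comp_X_pow, Polynomial.comp_assoc]
    simp
  ext j
  have h1 := congrArg (fun p => Polynomial.coeff p (N * j + i)) hb
  simp only [hcomp, Polynomial.finsetSum_coeff, Polynomial.coeff_zero,
    Polynomial.coeff_mul_X_pow'] at h1
  rw [Finset.sum_eq_single i] at h1
  · rw [if_pos (by omega), Nat.add_sub_cancel, mul_comm N, Polynomial.coeff_expand_mul hN,
      Polynomial.comp_C_mul_X_coeff] at h1
    simpa [he] using h1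
  · intro l _ hl
    split_ifs with h2
    · rw [Polynomial.coeff_expand hN, if_neg]
      rintro ⟨c, hc⟩
      apply hl
      have e1 : N * j + i = N * c + l := by omega
      have e2 := congrArg (· % N) e1
      simp only [Nat.mul_add_mod, Nat.mod_eq_of_lt i.2, Nat.mod_eq_of_lt l.2] at e2
      exact Fin.ext e2.symm
    · rfl
  · simp

/-- The residue extension at `x` has infinite degree over `k(z₀)`: a relation among the first
`expo s n` powers of `zₙ`, modulo an ideal contained in `(x)`, has coefficients in `k[z₀, x]`
divisible by every power of `x`. -/
lemma pow_dvd_of_relation (h : System k s x z) {E : Type} [Field E] (f : J →+* E)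
    (hfx : f x ≠ 0) (hker : ∀ a, f a = 0 → x ∣ a) (n m : ℕ)
    (a : Fin (expo s n) → Polynomial (Polynomial k))
    (ha : ∑ i, f (ev x (z 0) (a i)) * f (z n) ^ (i : ℕ) = 0) (i : Fin (expo s n)) :
    Polynomial.X ^ m ∣ a i := by
  induction m generalizing a i with
  | zero => simp
  | succ m ih =>
    have hX : ∀ i, Polynomial.X ∣ a i := by
      intro i
      rw [Polynomial.X_dvd_iff]
      obtain ⟨e, he, hdvd⟩ := h.exists_sign n
      refine eq_zero_of_sum_comp he (fun i => (a i).coeff 0) ?_ i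
      apply h.eq_zero_of_dvd_aeval (n := n)
      have h1 : x ∣ ∑ i, ev x (z 0) (a i) * z n ^ (i : ℕ) := hker _ (by simpa using ha)
      rw [← Ideal.mem_span_singleton, ← Ideal.Quotient.eq_zero_iff_mem] at h1 ⊢
      rw [← h1]
      simp only [map_sum, map_mul, map_pow, Polynomial.aeval_X, Polynomial.aeval_comp,
        Polynomial.aeval_C]
      refine Finset.sum_congr rfl fun i _ => ?_
      congr 1
      rw [Ideal.Quotient.eq, Ideal.mem_span_singleton]
      have h2 : x ∣ Polynomial.aeval (algebraMap k J e * z n ^ expo s n) ((a i).coeff 0) -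
          Polynomial.aeval (z 0) ((a i).coeff 0) := by
        refine dvd_trans ?_ (Polynomial.sub_dvd_eval_sub (algebraMap k J e * z n ^ expo s n) (z 0)
            (((a i).coeff 0).map (algebraMap k J)))
          |>.trans (by simp [Polynomial.aeval_def, Polynomial.eval_map])
        rw [dvd_sub_comm]; exact hdvd
      have h3 : x ∣ Polynomial.aeval (z 0) ((a i).coeff 0) - ev x (z 0) (a i) := by
        obtain ⟨c, hc⟩ := Polynomial.X_dvd_sub_C (p := a i)
        refine ⟨- ev x (z 0) c, ?_⟩
        have := congrArg (ev x (z 0)) hc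
        simp [ev] at this ⊢
        rw [← neg_sub, this]
      simpa using dvd_add h2 h3
    choose b hb using hX
    have h1 : f x * ∑ i, f (ev x (z 0) (b i)) * f (z n) ^ (i : ℕ) = 0 := by
      rw [← ha, Finset.mul_sum]
      refine Finset.sum_congr rfl fun i _ => ?_
      rw [hb i]
      simp [ev]; ring
    have := ih b ((mul_eq_zero.1 h1).resolve_left hfx) i
    rw [hb i, pow_succ']
    exact mul_dvd_mul_left _ this

lemma coeff_eq_zero_of_relation (h : System k s x z) {E : Type} [Field E] (f : J →+* E)
    (hfx : f x ≠ 0) (hker : ∀ a, f a = 0 → x ∣ a) (n : ℕ)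
    (a : Fin (expo s n) → Polynomial (Polynomial k))
    (ha : ∑ i, f (ev x (z 0) (a i)) * f (z n) ^ (i : ℕ) = 0) (i : Fin (expo s n)) :
    a i = 0 := by
  ext1 d
  have := h.pow_dvd_of_relation f hfx hker n (d + 1) a ha i
  rw [Polynomial.X_pow_dvd_iff] at this
  simpa using this d (Nat.lt_succ_self d)

/-- The three-variable polynomial ring as a polynomial ring in the last variable. -/
def toIter (k : Type) [Field k] :
    MvPolynomial (Fin 3) k →+* Polynomial (Polynomial (Polynomial k)) :=
  MvPolynomial.eval₂Hom (R := k) (S₁ := Polynomial (Polynomial (Polynomial k)))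
    ((Polynomial.C (R := Polynomial (Polynomial k))).comp
      ((Polynomial.C (R := Polynomial k)).comp (Polynomial.C (R := k))))
    ![Polynomial.C Polynomial.X, Polynomial.C (Polynomial.C Polynomial.X), Polynomial.X]

lemma toIter_injective : Function.Injective (toIter k) := by
  let Ψ : Polynomial (Polynomial (Polynomial k)) →+* MvPolynomial (Fin 3) k :=
    Polynomial.eval₂RingHom (Polynomial.eval₂RingHom (Polynomial.eval₂RingHom C (X 1)) (X 0)) (X 2)
  have : Ψ.comp (toIter k) = RingHom.id _ := by
    apply MvPolynomial.ringHom_ext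
    · intro r; simp [Ψ, toIter]
    · intro i; fin_cases i <;> simp [Ψ, toIter]
  exact Function.LeftInverse.injective (g := Ψ) fun p => DFunLike.congr_fun this p

/-- A prime contained in `(x)` and not containing `x` is zero: otherwise `z₁` would be algebraic
over `k(x, z₀)` modulo it, so all the `zₙ` would lie in one finite extension of `k(x, z₀)`,
contradicting the infinite residue degree at `x`. -/
lemma injective_of_ker [IsDomain J] (h : System k s x z) {E : Type} [Field E] (f : J →+* E)
    (hfx : f x ≠ 0) (hker : ∀ a, f a = 0 → x ∣ a) : Function.Injective f := by
  rw [injective_iff_map_eq_zero]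
  intro a ha
  by_contra hane
  let : Algebra (Polynomial (Polynomial k)) E := (f.comp (ev x (z 0))).toAlgebra
  have hmap : ∀ p, algebraMap (Polynomial (Polynomial k)) E p = f (ev x (z 0) p) := fun _ => rfl
  have hLI : ∀ n, LinearIndependent (Polynomial (Polynomial k))
      (fun i : Fin (expo s n) => f (z n) ^ (i : ℕ)) := by
    intro n
    rw [Fintype.linearIndependent_iff]
    intro g hg
    refine h.coeff_eq_zero_of_relation f hfx hker n g ?_
    simpa only [Algebra.smul_def, hmap] using hg
  have hinj : Function.Injective (algebraMap (Polynomial (Polynomial k)) E) := by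
    rw [injective_iff_map_eq_zero]
    intro p hp
    rw [hmap] at hp
    exact h.coeff_eq_zero_of_relation f hfx hker 0 (fun _ => p) (by simp [hp])
      ⟨0, h.lt_expo 0⟩
  have : FaithfulSMul (Polynomial (Polynomial k)) E :=
    (faithfulSMul_iff_algebraMap_injective _ _).2 hinj
  have halg : IsAlgebraic (Polynomial (Polynomial k)) (f (z 1)) := by
    obtain ⟨N, p, hp⟩ := h.exists_pow_mul_eq_theta a
    have hcomp : ((Polynomial.aeval (f (z 1))).toRingHom.comp (toIter k)) =
        f.comp (theta k x z 0).toRingHom := by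
      apply MvPolynomial.ringHom_ext
      · intro r; simp [toIter, hmap, ev]
      · intro i; fin_cases i <;> simp [toIter, hmap, ev, theta]
    refine ⟨toIter k p, ?_, ?_⟩
    · rw [Ne, map_eq_zero_iff _ toIter_injective]
      rintro rfl
      rw [map_zero] at hp
      exact mul_ne_zero (pow_ne_zero _ h.x_ne_zero) hane hp
    · have := DFunLike.congr_fun hcomp p
      simp only [RingHom.comp_apply, AlgHom.toRingHom_eq_coe, RingHom.coe_coe] at this
      rw [this, ← hp, map_mul, ha, mul_zero]
  let : Algebra (FractionRing (Polynomial (Polynomial k))) E := FractionRing.liftAlgebra _ E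
  have hInt : IsIntegral (FractionRing (Polynomial (Polynomial k))) (f (z 1)) :=
    (halg.extendScalars (IsFractionRing.injective _ _)).isIntegral
  let L := IntermediateField.adjoin (FractionRing (Polynomial (Polynomial k))) {f (z 1)}
  have : FiniteDimensional (FractionRing (Polynomial (Polynomial k))) L :=
    IntermediateField.adjoin.finiteDimensional hInt
  have hbase : ∀ p : Polynomial (Polynomial k), f (ev x (z 0) p) ∈ L := by
    intro p
    rw [← hmap, IsScalarTower.algebraMap_apply (Polynomial (Polynomial k))
      (FractionRing (Polynomial (Polynomial k))) E]
    exact L.algebraMap_mem _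
  have hxL : f x ∈ L := by simpa [ev] using hbase Polynomial.X
  have hzL : ∀ n, f (z n) ∈ L ∧ f (z (n + 1)) ∈ L := by
    intro n
    induction n with
    | zero =>
      exact ⟨by simpa [ev] using hbase (Polynomial.C Polynomial.X),
        IntermediateField.mem_adjoin_simple_self _ _⟩
    | succ n ih =>
      refine ⟨ih.2, ?_⟩
      have := congrArg f (h.rel n)
      rw [map_mul, mul_comm, ← eq_div_iff hfx] at this
      rw [this, map_add, map_pow]
      exact div_mem (add_mem (pow_mem ih.2 _) ih.1) hxL
  let d := Module.finrank (FractionRing (Polynomial (Polynomial k))) L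
  let v : Fin (expo s d) → L := fun i => ⟨f (z d), (hzL d).1⟩ ^ (i : ℕ)
  have hv : LinearIndependent (FractionRing (Polynomial (Polynomial k))) v := by
    apply LinearIndependent.of_comp L.val.toLinearMap
    rw [← LinearIndependent.iff_fractionRing (Polynomial (Polynomial k))]
    exact hLI d
  have := hv.fintype_card_le_finrank
  rw [Fintype.card_fin] at this
  exact absurd (h.lt_expo d) (not_lt.2 this)

/-- `⋂ xᵐJ = 0`: the intersection is a prime contained in `(x)` and not containing `x`. -/
lemma finiteMultiplicity [IsDomain J] (h : System k s x z) (hx : ¬ IsUnit x) {a : J}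
    (ha : a ≠ 0) : FiniteMultiplicity x a := by
  have hp := h.prime_x hx
  by_contra hfin
  let Q : Ideal J :=
    { carrier := {a | ∀ n : ℕ, x ^ n ∣ a}
      add_mem' := fun ha hb n => dvd_add (ha n) (hb n)
      zero_mem' := fun n => dvd_zero _
      smul_mem' := fun c a ha n => (ha n).mul_left c }
  have hmem : ∀ a, a ∈ Q ↔ ¬ FiniteMultiplicity x a := fun a =>
    FiniteMultiplicity.not_iff_forall.symm
  have hQ : Q.IsPrime := by
    refine ⟨?_, ?_⟩
    · rw [Ne, Ideal.eq_top_iff_one]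
      intro h1
      exact hx (isUnit_of_dvd_one (by simpa using h1 1))
    · intro a b hab
      rw [hmem] at hab
      rw [hmem, hmem]
      by_contra! H
      exact hab (hp.finiteMultiplicity_mul H.1 H.2)
  let f : J →+* FractionRing (J ⧸ Q) := (algebraMap (J ⧸ Q) _).comp (Ideal.Quotient.mk Q)
  have hf : ∀ a, f a = 0 ↔ a ∈ Q := by
    intro a
    simp only [f, RingHom.comp_apply]
    rw [map_eq_zero_iff _ (IsFractionRing.injective (J ⧸ Q) _), Ideal.Quotient.eq_zero_iff_mem]
  have hinj := h.injective_of_ker f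
    (fun h0 => by
      obtain ⟨c, hc⟩ := (hf x).1 h0 2
      refine hx (IsUnit.of_mul_eq_one c ?_)
      exact mul_left_cancel₀ h.x_ne_zero (by rw [mul_one, ← mul_assoc, ← pow_two, ← hc]))
    (fun a h0 => by simpa using (hf a).1 h0 1)
  refine ha (hinj ?_)
  rw [map_zero]
  exact (hf a).2 ((hmem a).2 hfin)

/-! ### Prime elements in the primes of `J` -/

/-- Every nonzero prime of `J` contains a prime element; this is the factoriality of `J`, deduced
in the manner of Nagata from that of `k[x, z₀, z₁]`. -/
lemma exists_prime_mem [IsDomain J] (h : System k s x z) (hx : ¬ IsUnit x) (p : Ideal J)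
    (hp : p.IsPrime) (hp0 : p ≠ ⊥) : ∃ c ∈ p, Prime c := by
  have hpx := h.prime_x hx
  by_cases hxp : x ∈ p
  · exact ⟨x, hxp, hpx⟩
  have hxpow : ∀ m, x ^ m ∉ p := fun m hm => hxp (hp.mem_of_pow_mem m hm)
  obtain ⟨a, hap, ha⟩ := Submodule.exists_mem_ne_zero_of_ne_bot hp0
  obtain ⟨N, r, hr⟩ := h.exists_pow_mul_eq_theta a
  have hr0 : r ≠ 0 := by
    rintro rfl
    rw [map_zero] at hr
    exact mul_ne_zero (pow_ne_zero _ h.x_ne_zero) ha hr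
  have hrp : r ∈ p.comap (theta k x z 0) := by
    rw [Ideal.mem_comap, ← hr]; exact p.mul_mem_left _ hap
  have hp' : (p.comap (theta k x z 0)).IsPrime := Ideal.comap_isPrime _ _
  obtain ⟨g, hgp, hg⟩ := hp'.exists_mem_prime_of_ne_bot
    (fun h0 => hr0 (by rwa [h0] at hrp))
  have hg0 : theta k x z 0 g ≠ 0 := by
    rw [Ne, map_eq_zero_iff _ h.inj_zero]; exact hg.ne_zero
  obtain ⟨c, hc, hxc⟩ := (h.finiteMultiplicity hx hg0).exists_eq_pow_mul_and_not_dvd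
  generalize multiplicity x (theta k x z 0 g) = m at hc
  have hcp : c ∈ p := by
    rw [Ideal.mem_comap, hc] at hgp
    exact (hp.mem_or_mem hgp).resolve_left (hxpow m)
  have key : ∀ N a A, x ^ N * a = theta k x z 0 A → g ∣ A → c ∣ a := by
    rintro N a A hA ⟨B, rfl⟩
    rw [map_mul, hc] at hA
    have h1 : x ^ N ∣ c * (x ^ m * theta k x z 0 B) := ⟨a, by rw [hA]; ring⟩
    obtain ⟨d, hd⟩ := hpx.pow_dvd_of_dvd_mul_left N hxc h1
    refine ⟨d, mul_left_cancel₀ (pow_ne_zero N h.x_ne_zero) ?_⟩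
    calc x ^ N * a = c * (x ^ m * theta k x z 0 B) := by rw [hA]; ring
      _ = _ := by rw [hd]; ring
  refine ⟨c, hcp, ?_, ?_, ?_⟩
  · rintro rfl; exact hxc (dvd_zero _)
  · intro hu; exact hp.ne_top (Ideal.eq_top_of_isUnit_mem _ hcp hu)
  · rintro a b ⟨d, hd⟩
    obtain ⟨N, A, hA⟩ := h.exists_pow_mul_eq_theta a
    obtain ⟨M, B, hB⟩ := h.exists_pow_mul_eq_theta b
    obtain ⟨K, D, hD⟩ := h.exists_pow_mul_eq_theta d
    have e : X 0 ^ (m + K) * (A * B) = g * (D * X 0 ^ (N + M)) := by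
      apply h.inj_zero
      simp only [map_mul, map_pow, theta_X0]
      rw [← hA, ← hB, ← hD, hc]
      calc _ = x ^ (m + K + N + M) * (a * b) := by ring
        _ = _ := by rw [hd]; ring
    rcases hg.dvd_or_dvd ⟨_, e⟩ with H | H
    · exfalso
      have h1 := p.mem_of_dvd (map_dvd (theta k x z 0) H) hgp
      rw [map_pow, theta_X0] at h1
      exact hxpow _ h1
    · rcases hg.dvd_or_dvd H with H | H
      · exact Or.inl (key N a A hA H)
      · exact Or.inr (key M b B hB H)

/-! ### The prime containing all the `zₙ` -/

/-- The trace on `J` of the extension of an ideal of `k[x, z₀, z₁]` to `k[x, x⁻¹, z₀, z₁]`. -/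
def pull (h : System k s x z) (q : Ideal (MvPolynomial (Fin 3) k)) : Ideal J where
  carrier := {a | ∃ N, ∃ r ∈ q, x ^ N * a = theta k x z 0 r}
  add_mem' := by
    rintro a b ⟨N, r, hr, hN⟩ ⟨M, t, ht, hM⟩
    refine ⟨N + M, X 0 ^ M * r + X 0 ^ N * t,
      q.add_mem (q.mul_mem_left _ hr) (q.mul_mem_left _ ht), ?_⟩
    simp only [map_add, map_mul, map_pow, theta_X0, ← hN, ← hM]
    ring
  zero_mem' := ⟨0, 0, q.zero_mem, by simp⟩
  smul_mem' := by
    rintro c a ⟨N, r, hr, hN⟩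
    obtain ⟨M, t, hM⟩ := h.exists_pow_mul_eq_theta c
    refine ⟨N + M, t * r, q.mul_mem_left _ hr, ?_⟩
    simp only [map_mul, ← hN, ← hM, smul_eq_mul]
    ring

lemma mem_pull_iff (h : System k s x z) {q : Ideal (MvPolynomial (Fin 3) k)} (hq : q.IsPrime)
    (hX : X 0 ∉ q) {N : ℕ} {a : J} {r : MvPolynomial (Fin 3) k}
    (hr : x ^ N * a = theta k x z 0 r) : a ∈ h.pull q ↔ r ∈ q := by
  refine ⟨?_, fun H => ⟨N, r, H, hr⟩⟩
  rintro ⟨M, t, ht, hM⟩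
  have e : X 0 ^ M * r = X 0 ^ N * t := by
    apply h.inj_zero
    simp only [map_mul, map_pow, theta_X0]
    rw [← hM, ← hr]; ring
  have : X 0 ^ M * r ∈ q := by rw [e]; exact q.mul_mem_left _ ht
  exact (hq.mem_or_mem this).resolve_left fun H => hX (hq.mem_of_pow_mem M H)

lemma theta_mem_pull_iff (h : System k s x z) {q : Ideal (MvPolynomial (Fin 3) k)}
    (hq : q.IsPrime) (hX : X 0 ∉ q) {r : MvPolynomial (Fin 3) k} :
    theta k x z 0 r ∈ h.pull q ↔ r ∈ q :=
  h.mem_pull_iff hq hX (N := 0) (by simp)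

lemma pull_isPrime (h : System k s x z) {q : Ideal (MvPolynomial (Fin 3) k)} (hq : q.IsPrime)
    (hX : X 0 ∉ q) : (h.pull q).IsPrime := by
  refine ⟨?_, ?_⟩
  · rw [Ne, Ideal.eq_top_iff_one, h.mem_pull_iff hq hX (N := 0) (r := 1) (by simp),
      ← Ideal.eq_top_iff_one]
    exact hq.ne_top
  · intro a b hab
    obtain ⟨N, r, hr⟩ := h.exists_pow_mul_eq_theta a
    obtain ⟨M, t, ht⟩ := h.exists_pow_mul_eq_theta b
    rw [h.mem_pull_iff hq hX hr, h.mem_pull_iff hq hX ht]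
    rw [h.mem_pull_iff hq hX (N := N + M) (r := r * t)
      (by rw [map_mul, ← hr, ← ht]; ring)] at hab
    exact hq.mem_or_mem hab

lemma pull_mono (h : System k s x z) {q q' : Ideal (MvPolynomial (Fin 3) k)} (hqq : q ≤ q') :
    h.pull q ≤ h.pull q' := by
  rintro a ⟨N, r, hr, hN⟩
  exact ⟨N, r, hqq hr, hN⟩

lemma three_le_height {R : Type} [CommRing R] [IsDomain R] {p q P : Ideal R} (hp : p.IsPrime)
    (hq : q.IsPrime) (hP : P.IsPrime) (h0 : p ≠ ⊥) (hpq : p < q) (hqP : q < P) :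
    3 ≤ Order.height (⟨P, hP⟩ : PrimeSpectrum R) := by
  have h1 : (⟨⊥, Ideal.isPrime_bot⟩ : PrimeSpectrum R) < ⟨p, hp⟩ :=
    show (⊥ : Ideal R) < p from bot_lt_iff_ne_bot.2 h0
  have h2 : (⟨p, hp⟩ : PrimeSpectrum R) < ⟨q, hq⟩ := hpq
  have h3 : (⟨q, hq⟩ : PrimeSpectrum R) < ⟨P, hP⟩ := hqP
  calc (3 : ℕ∞) = 0 + 1 + 1 + 1 := by norm_num
    _ ≤ Order.height (⟨⊥, Ideal.isPrime_bot⟩ : PrimeSpectrum R) + 1 + 1 + 1 := by gcongr; simp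
    _ ≤ Order.height (⟨p, hp⟩ : PrimeSpectrum R) + 1 + 1 := by
      gcongr; exact Order.height_add_one_le h1
    _ ≤ Order.height (⟨q, hq⟩ : PrimeSpectrum R) + 1 := by
      gcongr; exact Order.height_add_one_le h2
    _ ≤ _ := Order.height_add_one_le h3

/-- The prime `(x, z₀, z₁, …)` has height at least `3`, through the traces of `(z₀)` and
`(z₀, z₁)`. -/
lemma three_le_height_of_mem [IsDomain J] (h : System k s x z) {P : Ideal J} (hP : P.IsPrime)
    (hxP : x ∈ P) (hzP : z 0 ∈ P) : 3 ≤ Order.height (⟨P, hP⟩ : PrimeSpectrum J) := by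
  have hz : ∀ n, z n ∈ P := by
    intro n
    induction n with
    | zero => exact hzP
    | succ n ih =>
      have h1 : z (n + 1) ^ s (n + 2) ∈ P := by
        rw [eq_sub_of_add_eq (h.rel n).symm]
        exact P.sub_mem (P.mul_mem_right _ hxP) ih
      exact hP.mem_of_pow_mem _ h1
  let ρ₁ : MvPolynomial (Fin 3) k →ₐ[k] MvPolynomial (Fin 3) k := aeval ![X 0, 0, X 2]
  let ρ₂ : MvPolynomial (Fin 3) k →ₐ[k] MvPolynomial (Fin 3) k := aeval ![X 0, 0, 0]
  have hρ : ρ₂.comp ρ₁ = ρ₂ := by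
    apply MvPolynomial.algHom_ext
    intro i; fin_cases i <;> simp [ρ₁, ρ₂]
  have hq₁ : (RingHom.ker ρ₁).IsPrime := RingHom.ker_isPrime _
  have hq₂ : (RingHom.ker ρ₂).IsPrime := RingHom.ker_isPrime _
  have hX₁ : X 0 ∉ RingHom.ker ρ₁ := by
    simp [RingHom.mem_ker, ρ₁, MvPolynomial.X_ne_zero]
  have hX₂ : X 0 ∉ RingHom.ker ρ₂ := by
    simp [RingHom.mem_ker, ρ₂, MvPolynomial.X_ne_zero]
  have hp₁ := h.pull_isPrime hq₁ hX₁
  have hp₂ := h.pull_isPrime hq₂ hX₂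
  have hx₂ : x ∉ h.pull (RingHom.ker ρ₂) := by
    have e := h.theta_mem_pull_iff hq₂ hX₂ (r := X 0)
    rw [theta_X0] at e
    rwa [e]
  have hz₂ : ∀ n, z n ∈ h.pull (RingHom.ker ρ₂) ∧ z (n + 1) ∈ h.pull (RingHom.ker ρ₂) := by
    intro n
    induction n with
    | zero =>
      constructor
      · rw [← theta_X1 (k := k) x z 0, h.theta_mem_pull_iff hq₂ hX₂]
        simp [RingHom.mem_ker, ρ₂]
      · rw [← theta_X2 (k := k) x z 0, h.theta_mem_pull_iff hq₂ hX₂]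
        simp [RingHom.mem_ker, ρ₂]
    | succ n ih =>
      refine ⟨ih.2, (hp₂.mem_or_mem (x := x) ?_).resolve_left hx₂⟩
      rw [h.rel]
      refine Ideal.add_mem _ (Ideal.pow_mem_of_mem _ ih.2 _ ?_) ih.1
      have := h.two_le n
      omega
  -- Modulo the `zₙ`, an element of `J` is a polynomial in `x`, and no nonzero polynomial in `x`
  -- lies in the trace of `(z₀, z₁)`.
  have hle : h.pull (RingHom.ker ρ₂) ≤ P := by
    intro a ha
    obtain ⟨n, r, rfl⟩ := h.exhaust a
    obtain ⟨g, hg⟩ : ∃ g : Polynomial k,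
        theta k x z n r - Polynomial.aeval x g ∈ h.pull (RingHom.ker ρ₂) ⊓ P := by
      refine ⟨aeval ![Polynomial.X, 0, 0] r, ?_⟩
      rw [← Ideal.Quotient.eq]
      suffices H : (Ideal.Quotient.mkₐ k (h.pull (RingHom.ker ρ₂) ⊓ P)).comp (theta k x z n) =
          ((Ideal.Quotient.mkₐ k (h.pull (RingHom.ker ρ₂) ⊓ P)).comp (Polynomial.aeval x)).comp
            (aeval ![Polynomial.X, 0, 0]) from DFunLike.congr_fun H r
      apply MvPolynomial.algHom_ext
      intro i
      fin_cases i
      · simp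
      · simpa [Ideal.Quotient.eq_zero_iff_mem] using ⟨(hz₂ n).1, hz n⟩
      · simpa [Ideal.Quotient.eq_zero_iff_mem] using ⟨(hz₂ n).2, hz (n + 1)⟩
    have hg2 : Polynomial.aeval x g ∈ h.pull (RingHom.ker ρ₂) := by
      simpa using Ideal.sub_mem _ ha hg.1
    have hg0 : g = 0 := by
      have e : theta k x z 0 (Polynomial.aeval (X 0) g) = Polynomial.aeval x g := by
        rw [← Polynomial.aeval_algHom_apply, theta_X0]
      rw [← e, h.theta_mem_pull_iff hq₂ hX₂, RingHom.mem_ker] at hg2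
      have h3 := congrArg (aeval ![(Polynomial.X : Polynomial k), 0, 0]) hg2
      rw [← Polynomial.aeval_algHom_apply, ← Polynomial.aeval_algHom_apply] at h3
      simpa [ρ₂] using h3
    have := hg.2
    rwa [hg0, map_zero, sub_zero] at this
  refine three_le_height hp₁ hp₂ hP ?_ (lt_of_le_of_ne (h.pull_mono ?_) ?_)
    (lt_of_le_of_ne hle ?_)
  · intro h0
    have h1 : theta k x z 0 (X 1) ∈ h.pull (RingHom.ker ρ₁) := by
      rw [h.theta_mem_pull_iff hq₁ hX₁]; simp [RingHom.mem_ker, ρ₁]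
    rw [h0, Ideal.mem_bot, map_eq_zero_iff _ h.inj_zero] at h1
    exact MvPolynomial.X_ne_zero _ h1
  · intro r hr
    rw [RingHom.mem_ker] at hr ⊢
    have := DFunLike.congr_fun hρ r
    rw [← this, AlgHom.comp_apply, hr, map_zero]
  · intro h0
    have h1 : theta k x z 0 (X 2) ∈ h.pull (RingHom.ker ρ₂) := by
      rw [theta_X2]; exact (hz₂ 0).2
    rw [← h0, h.theta_mem_pull_iff hq₁ hX₁] at h1
    simp [RingHom.mem_ker, ρ₁, MvPolynomial.X_ne_zero] at h1
  · intro h0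
    exact hx₂ (h0 ▸ hxP)

/-! ### Generators at the remaining primes -/

/-- Away from `z₀ = 0` the extensions `k[z₀] ⊆ k[zₙ]` are unramified in characteristic zero, so
`P` is locally generated by `x` and a generator of `P ∩ k[z₀]`. -/
lemma exists_generator [CharZero k] (h : System k s x z) {P : Ideal J} (hP : P.IsPrime)
    (hxP : x ∈ P) (hzP : z 0 ∉ P) :
    ∃ b ∈ P, ∀ a ∈ P, ∃ u ∉ P, u * a ∈ Ideal.span {x, b} := by
  let π : J →ₐ[k] J ⧸ P := Ideal.Quotient.mkₐ k P
  have hπ : ∀ a, π a = 0 ↔ a ∈ P := fun a => Ideal.Quotient.eq_zero_iff_mem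
  refine ⟨Polynomial.aeval (z 0) (minpoly k (π (z 0))), ?_, ?_⟩
  · rw [← hπ, ← Polynomial.aeval_algHom_apply, minpoly.aeval]
  intro a ha
  obtain ⟨n, g, hg⟩ := h.exists_dvd_sub_aeval a
  obtain ⟨e, he, hdvd⟩ := h.exists_sign n
  have hgz : Polynomial.aeval (π (z n)) g = 0 := by
    rw [Polynomial.aeval_algHom_apply, hπ]
    simpa using P.sub_mem ha (P.mem_of_dvd hg hxP)
  have hz0 : π (z 0) = algebraMap k _ e * π (z n) ^ expo s n := by
    rw [← sub_eq_zero, ← AlgHom.commutes π, ← map_pow, ← map_mul, ← map_sub, hπ]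
    exact P.mem_of_dvd hdvd hxP
  have hxspan : ∀ b c : J, x ∣ c → c ∈ Ideal.span {x, b} := fun b c hc =>
    Ideal.mem_of_dvd _ hc (Ideal.subset_span (by simp))
  by_cases hInt : IsIntegral k (π (z n))
  swap
  · have : g = 0 := by
      by_contra hg0
      exact hInt (isAlgebraic_iff_isIntegral.1 ⟨g, hg0, hgz⟩)
    refine ⟨1, fun h1 => hP.ne_top ((Ideal.eq_top_iff_one _).2 h1), hxspan _ _ ?_⟩
    simpa [this] using hg
  have hInt0 : IsIntegral k (π (z 0)) := by
    rw [hz0]; exact isIntegral_algebraMap.mul (hInt.pow _)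
  let f := minpoly k (π (z 0))
  let w := minpoly k (π (z n))
  let S : Polynomial k := Polynomial.C e * Polynomial.X ^ expo s n
  have hS : Polynomial.aeval (π (z n)) S = π (z 0) := by simp [S, hz0]
  obtain ⟨v, hv⟩ : w ∣ f.comp S := minpoly.dvd _ _ (by
    rw [Polynomial.aeval_comp, hS]; exact minpoly.aeval _ _)
  obtain ⟨g', hg'⟩ : w ∣ g := minpoly.dvd _ _ hgz
  refine ⟨Polynomial.aeval (z n) v, ?_, ?_⟩
  · rw [← hπ, ← Polynomial.aeval_algHom_apply]
    intro hv0
    -- A double root of `f(S)` at `π (z n)` would force `f'` or `S'` to vanish there.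
    have h1 := congrArg (fun p => Polynomial.aeval (π (z n)) (Polynomial.derivative p)) hv
    have hw0 : Polynomial.aeval (π (z n)) w = 0 := minpoly.aeval _ _
    simp only [Polynomial.derivative_mul, Polynomial.derivative_comp, map_add, map_mul, hv0, hw0,
      Polynomial.aeval_comp, hS, mul_zero, zero_mul, add_zero] at h1
    have hf' := (minpoly.irreducible hInt0).separable.aeval_derivative_ne_zero
      (minpoly.aeval k (π (z 0)))
    have h2 := (mul_eq_zero.1 h1).resolve_right hf'
    have hzn : π (z n) ≠ 0 := by
      intro h0
      apply hzP
      rw [← hπ, hz0, h0, zero_pow (by have := h.lt_expo n; omega), mul_zero]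
    have hexpo : ((expo s n : ℕ) : J ⧸ P) ≠ 0 := by
      rw [← map_natCast (algebraMap k (J ⧸ P)), Ne, map_eq_zero, Nat.cast_eq_zero]
      have := h.lt_expo n
      omega
    have he' : algebraMap k (J ⧸ P) e ≠ 0 := by rwa [Ne, map_eq_zero]
    simp [S, Polynomial.derivative_X_pow, he, hzn, hexpo] at h2
  · have e1 : Polynomial.aeval (z n) v * a =
        Polynomial.aeval (z n) v * (a - Polynomial.aeval (z n) g) +
        Polynomial.aeval (z n) g' * (Polynomial.aeval (z n) (f.comp S) -
          Polynomial.aeval (z 0) f) + Polynomial.aeval (z n) g' * Polynomial.aeval (z 0) f := by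
      rw [hv, hg']; simp only [map_mul]; ring
    rw [e1]
    refine Ideal.add_mem _ (Ideal.add_mem _ (hxspan _ _ (hg.mul_left _))
      (hxspan _ _ (Dvd.dvd.mul_left ?_ _)))
      (Ideal.mul_mem_left _ _ (Ideal.subset_span (by simp [f])))
    rw [Polynomial.aeval_comp]
    have h5 : x ∣ Polynomial.aeval (z n) S - z 0 := by
      rw [dvd_sub_comm]; simpa [S] using hdvd
    refine h5.trans ?_
    simpa [Polynomial.aeval_def, Polynomial.eval_map] using
      Polynomial.sub_dvd_eval_sub (Polynomial.aeval (z n) S) (z 0) (f.map (algebraMap k J))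

/-- With `P` locally generated by `x` and `b`, Cohen's criterion applies to the localization: by the
height bound a prime strictly below `P` is `⊥` or generated by any prime element it contains. -/
theorem main [IsDomain J] [CharZero k] (h : System k s x z) (P : Ideal J) (hP : P.IsPrime)
    (hxP : x ∈ P) (hht : Order.height (⟨P, hP⟩ : PrimeSpectrum J) = 2)
    (Rloc : Type) [CommRing Rloc] [Algebra J Rloc] [IsLocalization.AtPrime Rloc P] :
    IsNoetherianRing Rloc ∧ IsLocalRing Rloc ∧
      ∃ a b : Rloc, Ideal.map (algebraMap J Rloc) P = Ideal.span {a, b} := by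
  have hx : ¬ IsUnit x := fun hu => hP.ne_top (Ideal.eq_top_of_isUnit_mem _ hxP hu)
  have hht' : ¬ (3 ≤ Order.height (⟨P, hP⟩ : PrimeSpectrum J)) := by rw [hht]; decide
  have hzP : z 0 ∉ P := fun hz => hht' (h.three_le_height_of_mem hP hxP hz)
  have hgen : ∃ a b : Rloc, Ideal.map (algebraMap J Rloc) P = Ideal.span {a, b} := by
    obtain ⟨b, hb, H⟩ := h.exists_generator hP hxP hzP
    refine ⟨algebraMap J Rloc x, algebraMap J Rloc b, ?_⟩
    have e : Ideal.span {algebraMap J Rloc x, algebraMap J Rloc b} =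
        Ideal.map (algebraMap J Rloc) (Ideal.span {x, b}) := by
      rw [Ideal.map_span, Set.image_pair]
    rw [e]
    apply le_antisymm
    · rw [Ideal.map_le_iff_le_comap]
      intro a ha
      obtain ⟨u, hu, hua⟩ := H a ha
      have h1 := Ideal.mem_map_of_mem (algebraMap J Rloc) hua
      rw [map_mul] at h1
      exact (Ideal.unit_mul_mem_iff_mem _
        (IsLocalization.map_units Rloc (⟨u, hu⟩ : P.primeCompl))).1 h1
    · apply Ideal.map_mono
      rw [Ideal.span_le]
      rintro _ (rfl | rfl)
      exacts [hxP, hb]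
  refine ⟨?_, IsLocalization.AtPrime.isLocalRing Rloc P, hgen⟩
  -- Cohen's criterion; primes of the localization are extended from primes `p ≤ P` of `J`.
  apply IsNoetherianRing.of_prime
  intro I hI
  have hpI : (Ideal.comap (algebraMap J Rloc) I).IsPrime := Ideal.comap_isPrime _ _
  have hmap := IsLocalization.map_under P.primeCompl Rloc I
  rw [Ideal.under_def] at hmap
  rw [← hmap]
  have hle : Ideal.comap (algebraMap J Rloc) I ≤ P := by
    intro a ha
    by_contra haP
    exact hI.ne_top (Ideal.eq_top_of_isUnit_mem _ (Ideal.mem_comap.1 ha)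
      (IsLocalization.map_units Rloc (⟨a, haP⟩ : P.primeCompl)))
  generalize Ideal.comap (algebraMap J Rloc) I = p at *
  rcases eq_or_lt_of_le hle with rfl | hlt
  · obtain ⟨a, b, hab⟩ := hgen
    rw [hab]
    exact Submodule.fg_span (Set.toFinite _)
  by_cases hp0 : p = ⊥
  · rw [hp0]; exact Ideal.FG.map (Submodule.fg_bot) _
  obtain ⟨c, hcp, hc⟩ := h.exists_prime_mem hx p hpI hp0
  have hspan : Ideal.span {c} = p := by
    by_contra hne
    exact hht' (three_le_height ((Ideal.span_singleton_prime hc.ne_zero).2 hc) hpI hP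
      (by simpa using hc.ne_zero)
      (lt_of_le_of_ne ((Ideal.span_singleton_le_iff_mem _).2 hcp) hne) hlt)
  rw [← hspan]
  exact Ideal.FG.map ⟨{c}, by simp⟩ _

end System

end DavidDomain

namespace DavidDomain

/-! ### David's domain -/

lemma davidX_ne_zero (k : Type) [Field k] : davidX k ≠ 0 := by
  rw [davidX, Ne, map_eq_zero_iff _ (IsFractionRing.injective _ _)]
  exact MvPolynomial.X_ne_zero _

lemma davidZeta_rel (k : Type) [Field k] (s : ℕ → ℕ) (n : ℕ) :
    davidX k * davidZeta k s (n + 2) = davidZeta k s (n + 1) ^ s (n + 2) + davidZeta k s n := by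
  rw [davidZeta, mul_div_cancel₀ _ (davidX_ne_zero k)]

lemma davidJn_le_succ (k : Type) [Field k] (s : ℕ → ℕ) (n : ℕ) :
    davidJn k s n ≤ davidJn k s (n + 1) := by
  have hX : davidX k ∈ davidJn k s (n + 1) := Algebra.subset_adjoin (by simp)
  have h1 : davidZeta k s (n + 1) ∈ davidJn k s (n + 1) := Algebra.subset_adjoin (by simp)
  have h2 : davidZeta k s (n + 2) ∈ davidJn k s (n + 1) := Algebra.subset_adjoin (by simp)
  rw [davidJn, Algebra.adjoin_le_iff]
  rintro _ (rfl | rfl | rfl)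
  · exact hX
  · rw [eq_sub_of_add_eq' (davidZeta_rel k s n).symm]
    exact sub_mem (mul_mem hX h2) (pow_mem h1 _)
  · exact h1

lemma davidZeta_mem (k : Type) [Field k] (s : ℕ → ℕ) (n : ℕ) : davidZeta k s n ∈ davidJ k s :=
  le_iSup (davidJn k s) n (Algebra.subset_adjoin (by simp))

lemma davidJ_val_comp_theta (k : Type) [Field k] (s : ℕ → ℕ) (n : ℕ) :
    (davidJ k s).val.comp (theta k (⟨davidX k, davidX_mem k s⟩ : davidJ k s)
        (fun n => ⟨davidZeta k s n, davidZeta_mem k s n⟩) n) =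
      MvPolynomial.aeval ![davidX k, davidZeta k s n, davidZeta k s (n + 1)] := by
  apply MvPolynomial.algHom_ext
  intro i
  rw [AlgHom.comp_apply, MvPolynomial.aeval_X]
  fin_cases i
  · exact congrArg Subtype.val (theta_X0 _ _ _)
  · exact congrArg Subtype.val (theta_X1 _ _ _)
  · exact congrArg Subtype.val (theta_X2 _ _ _)

lemma exists_theta_eq (k : Type) [Field k] (s : ℕ → ℕ) (a : davidJ k s) :
    ∃ n p, theta k (⟨davidX k, davidX_mem k s⟩ : davidJ k s)
      (fun n => ⟨davidZeta k s n, davidZeta_mem k s n⟩) n p = a := by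
  obtain ⟨a, ha⟩ := a
  have hmono : Monotone (davidJn k s) := monotone_nat_of_le_succ (davidJn_le_succ k s)
  have ha' : a ∈ ((⨆ n, davidJn k s n : Subalgebra k (DavidField k)) : Set (DavidField k)) := ha
  rw [Subalgebra.coe_iSup_of_directed hmono.directed_le, Set.mem_iUnion] at ha'
  obtain ⟨n, hn⟩ := ha'
  have hrange : ({davidX k, davidZeta k s n, davidZeta k s (n + 1)} : Set (DavidField k)) =
      Set.range ![davidX k, davidZeta k s n, davidZeta k s (n + 1)] := by
    simp only [Matrix.range_cons, Matrix.range_empty, Set.union_empty, Set.singleton_union]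
  rw [SetLike.mem_coe, davidJn, hrange, Algebra.adjoin_range_eq_range_aeval] at hn
  obtain ⟨p, hp⟩ := hn
  exact ⟨n, p, Subtype.ext ((DFunLike.congr_fun (davidJ_val_comp_theta k s n) p).trans hp)⟩

lemma theta_zero_injective (k : Type) [Field k] (s : ℕ → ℕ) :
    Function.Injective (theta k (⟨davidX k, davidX_mem k s⟩ : davidJ k s)
      (fun n => ⟨davidZeta k s n, davidZeta_mem k s n⟩) 0) := by
  have H : MvPolynomial.aeval ![davidX k, davidZeta k s 0, davidZeta k s 1] =
      IsScalarTower.toAlgHom k (MvPolynomial (Fin 3) k) (DavidField k) := by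
    apply MvPolynomial.algHom_ext
    intro i
    rw [MvPolynomial.aeval_X]
    fin_cases i <;> rfl
  intro p q hpq
  have h1 := congrArg (davidJ k s).val hpq
  rw [← AlgHom.comp_apply, ← AlgHom.comp_apply, davidJ_val_comp_theta, zero_add, H] at h1
  exact IsFractionRing.injective (MvPolynomial (Fin 3) k) (DavidField k) h1

/-- David's domain is a `System`; the union defining `J` is directed because `Jₙ ⊆ Jₙ₊₁`. -/
lemma davidSystem (k : Type) [Field k] (s : ℕ → ℕ) (hs : ∀ n, 2 ≤ n → 2 ≤ s n) :
    System k s (⟨davidX k, davidX_mem k s⟩ : davidJ k s)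
      (fun n => ⟨davidZeta k s n, davidZeta_mem k s n⟩) where
  two_le n := hs _ (by omega)
  rel n := Subtype.ext (davidZeta_rel k s n)
  exhaust := exists_theta_eq k s
  inj_zero := theta_zero_injective k s

end DavidDomain

set_option synthInstance.maxHeartbeats 1000000 in
set_option maxHeartbeats 1000000 in
/-- For every prime ideal `P` of David's domain `J` with `X ∈ P` and
`height(P) = 2`, the localization `J_P` (realized as any ring `Rloc` with
`IsLocalization.AtPrime Rloc P`) is a Noetherian local ring, and its maximal ideal
`P·J_P` is generated by two elements. -/
theorem davidJ_localization_at_height_two_prime_containing_X_noetherian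
    [CharZero k] (hs : ∀ n, 2 ≤ n → 2 ≤ s n)
    (P : Ideal (davidJ k s)) (hP : P.IsPrime)
    (hX : (⟨davidX k, davidX_mem k s⟩ : davidJ k s) ∈ P)
    (hht : Order.height (⟨P, hP⟩ : PrimeSpectrum (davidJ k s)) = 2)
    (Rloc : Type) [CommRing Rloc] [Algebra (davidJ k s) Rloc]
    [IsLocalization.AtPrime Rloc P] :
    IsNoetherianRing Rloc ∧ IsLocalRing Rloc ∧
      ∃ a b : Rloc, Ideal.map (algebraMap (davidJ k s) Rloc) P = Ideal.span {a, b} := by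
  exact (DavidDomain.davidSystem k s hs).main P hP hX hht Rloc

end
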